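/- arXiv:1801.04466 — 2 statements merged into one kernel-verified Lean document; each statement's English description precedes it below -/
import Mathlib

section
/- Let n ≥ k ≥ 1, let Φ be an n×k real matrix with orthonormal columns (Φᵀ Φ = I_k), and let V be an invertible k×k real matrix. For each k-element subset S of {1,…,n}, let r_S² = inf{ ‖Φ_S V u‖² : u ∈ ℤ^k, u ≠ 0 } and let r_V² = inf{ ‖V u‖² : u ∈ ℤ^k, u ≠ 0 }. Then the average of r_S² over all C(n,k) subsets S satisfies (1/C(n,k)) ∑_S r_S² ≤ (k/n) · r_V². -/
/-!
For nonzero `u ∈ ℤ^k` the vector `Φ V u` has length `‖V u‖`, and its restriction to the coordinates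
in `S` is a competitor for the shortest vector of `Φ_S V ℤ^k`. Averaged over `S`, the squared length
of the restriction is `(k/n) ‖Φ V u‖²`, because each coordinate lies in the same proportion `k/n` of
the `k`-subsets. It remains to take the infimum over `u`.
-/

open Matrix

/-- The `k × k` submatrix of `Φ` formed by the rows indexed by the `k`-element subset `S`. -/
def rowsSub {n k : ℕ} (Φ : Matrix (Fin n) (Fin k) ℝ)
    (S : {s : Finset (Fin n) // s.card = k}) : Matrix (Fin k) (Fin k) ℝ :=
  fun i j => Φ ((S.1.orderIsoOfFin S.2 i : Fin n)) j

/-- Squared Euclidean norm of a vector in `ℝ^k`. -/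
def sqnorm {k : ℕ} (x : Fin k → ℝ) : ℝ := ∑ i, x i ^ 2

/-- The squared length of the shortest nonzero vector of the lattice `M ℤ^k`. -/
noncomputable def minSq {k : ℕ} (M : Matrix (Fin k) (Fin k) ℝ) : ℝ :=
  sInf {t : ℝ | ∃ u : Fin k → ℤ, u ≠ 0 ∧ t = sqnorm (M.mulVec fun j => (u j : ℝ))}

section Averaging

open Finset

variable {α : Type*}

theorem sum_powersetCard_sum {M : Type*} [AddCommMonoid M] {k : ℕ} (hk : k ≠ 0) (t : Finset α)
    (f : α → M) :
    ∑ s ∈ t.powersetCard k, ∑ i ∈ s, f i = (#t - 1).choose (k - 1) • ∑ i ∈ t, f i := by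
  classical
  have card_containing (i : α) (hi : i ∈ t) :
      #{s ∈ t.powersetCard k | i ∈ s} = (#t - 1).choose (k - 1) := by
    simpa using card_filter_powersetCard_subset {i} t k (by simpa using hi)
      (by simpa using Nat.one_le_iff_ne_zero.2 hk)
  calc ∑ s ∈ t.powersetCard k, ∑ i ∈ s, f i
      = ∑ i ∈ t, ∑ s ∈ t.powersetCard k with i ∈ s, f i :=
        sum_comm' fun s i => by grind
    _ = ∑ i ∈ t, (#t - 1).choose (k - 1) • f i :=
        sum_congr rfl fun i hi => by rw [sum_const, card_containing i hi]
    _ = (#t - 1).choose (k - 1) • ∑ i ∈ t, f i := (smul_sum ..).symm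

theorem average_powersetCard_sum {𝕜 : Type*} [Field 𝕜] [CharZero 𝕜] {k : ℕ} {t : Finset α}
    (hkt : k ≤ #t) (f : α → 𝕜) :
    (1 / ((#t).choose k : 𝕜)) * ∑ s ∈ t.powersetCard k, ∑ i ∈ s, f i
      = ((k : 𝕜) / #t) * ∑ i ∈ t, f i := by
  obtain rfl | hk := eq_or_ne k 0
  · simp
  have ht : #t ≠ 0 := by lia
  have choose_ne_zero : ((#t).choose k : 𝕜) ≠ 0 := mod_cast (Nat.choose_pos hkt).ne'
  have absorption : (#t : 𝕜) * (#t - 1).choose (k - 1) = (#t).choose k * k := by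
    have := Nat.add_one_mul_choose_eq (#t - 1) (k - 1)
    rw [Nat.sub_one_add_one ht, Nat.sub_one_add_one hk] at this
    exact_mod_cast this
  rw [sum_powersetCard_sum hk, nsmul_eq_mul, ← mul_assoc, one_div_mul_eq_div]
  congr 1
  rw [div_eq_div_iff choose_ne_zero (mod_cast ht)]
  linear_combination absorption

end Averaging

section Lattice

variable {n k : ℕ}

theorem sqnorm_nonneg (x : Fin k → ℝ) : 0 ≤ sqnorm x :=
  Finset.sum_nonneg fun _ _ => sq_nonneg _

theorem sqnorm_eq_dotProduct_self (x : Fin k → ℝ) : sqnorm x = x ⬝ᵥ x := by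
  simp only [sqnorm, dotProduct, sq]

theorem sqnorm_mulVec_of_transpose_mul_self_eq_one {Φ : Matrix (Fin n) (Fin k) ℝ}
    (hΦ : Φᵀ * Φ = 1) (x : Fin k → ℝ) : sqnorm (Φ *ᵥ x) = sqnorm x := by
  rw [sqnorm_eq_dotProduct_self, sqnorm_eq_dotProduct_self, dotProduct_mulVec, vecMul_mulVec, hΦ,
    vecMul_one]

theorem rowsSub_mul (Φ : Matrix (Fin n) (Fin k) ℝ) (V : Matrix (Fin k) (Fin k) ℝ)
    (S : {s : Finset (Fin n) // s.card = k}) : rowsSub Φ S * V = rowsSub (Φ * V) S :=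
  rfl

theorem sqnorm_rowsSub_mulVec (B : Matrix (Fin n) (Fin k) ℝ)
    (S : {s : Finset (Fin n) // s.card = k}) (x : Fin k → ℝ) :
    sqnorm (rowsSub B S *ᵥ x) = ∑ i ∈ S.1, (B *ᵥ x) i ^ 2 := by
  rw [← Finset.sum_coe_sort]
  exact Fintype.sum_equiv (S.1.orderIsoOfFin S.2).toEquiv _ _ fun _ => rfl

theorem average_sqnorm_rowsSub_mulVec (hkn : k ≤ n) (B : Matrix (Fin n) (Fin k) ℝ)
    (x : Fin k → ℝ) :
    (1 / (n.choose k : ℝ)) *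
        ∑ S : {s : Finset (Fin n) // s.card = k}, sqnorm (rowsSub B S *ᵥ x)
      = ((k : ℝ) / (n : ℝ)) * sqnorm (B *ᵥ x) := by
  have sum_subsets :
      ∑ s ∈ Finset.univ.powersetCard k, ∑ i ∈ s, (B *ᵥ x) i ^ 2
        = ∑ S : {s : Finset (Fin n) // s.card = k}, ∑ i ∈ S.1, (B *ᵥ x) i ^ 2 :=
    Finset.sum_subtype _ (fun _ => Finset.mem_powersetCard_univ) _
  simp only [sqnorm_rowsSub_mulVec, ← sum_subsets]
  simpa only [Finset.card_fin, sqnorm] using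
    average_powersetCard_sum (hkn.trans_eq (Finset.card_fin n).symm) fun i => (B *ᵥ x) i ^ 2

theorem minSq_eq_iInf (M : Matrix (Fin k) (Fin k) ℝ) :
    minSq M = ⨅ u : {u : Fin k → ℤ // u ≠ 0}, sqnorm (M *ᵥ fun j => (u.1 j : ℝ)) := by
  rw [minSq, iInf]
  congr 1
  ext t
  simp only [Set.mem_ofPred_eq, Set.mem_range, Subtype.exists, exists_prop, eq_comm]

theorem minSq_le (M : Matrix (Fin k) (Fin k) ℝ) {u : Fin k → ℤ} (hu : u ≠ 0) :
    minSq M ≤ sqnorm (M *ᵥ fun j => (u j : ℝ)) :=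
  csInf_le ⟨0, by rintro _ ⟨_, -, rfl⟩; exact sqnorm_nonneg _⟩ ⟨u, hu, rfl⟩

theorem avg_minSq_le_trace_bound_general (hk : 1 ≤ k) (hkn : k ≤ n)
    (B : Matrix (Fin n) (Fin k) ℝ) :
    (1 / (n.choose k : ℝ)) * ∑ S : {s : Finset (Fin n) // s.card = k}, minSq (rowsSub B S)
      ≤ ((k : ℝ) / (n : ℝ)) *
        ⨅ u : {u : Fin k → ℤ // u ≠ 0}, sqnorm (B *ᵥ fun j => (u.1 j : ℝ)) := by
  have : NeZero k := ⟨Nat.one_le_iff_ne_zero.1 hk⟩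
  have : Nonempty {u : Fin k → ℤ // u ≠ 0} := ⟨1, one_ne_zero⟩
  rw [Real.mul_iInf_of_nonneg (by positivity)]
  refine le_ciInf fun u => ?_
  rw [← average_sqnorm_rowsSub_mulVec hkn]
  gcongr with S
  exact minSq_le _ u.2

end Lattice

/-- Trace bound: the average over all `k`-subsets `S` of the squared shortest
vector of the child lattice `Φ_S V ℤ^k` is at most `(k/n)` times the squared
shortest vector of the mother lattice `V ℤ^k`. -/
theorem avg_minSq_le_trace_bound (n k : ℕ) (hk : 1 ≤ k) (hkn : k ≤ n)
    (Φ : Matrix (Fin n) (Fin k) ℝ) (hΦ : Φᵀ * Φ = 1)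
    (V : Matrix (Fin k) (Fin k) ℝ) (hV : IsUnit V.det) :
    (1 / (n.choose k : ℝ)) *
        ∑ S : {s : Finset (Fin n) // s.card = k}, minSq (rowsSub Φ S * V)
      ≤ ((k : ℝ) / (n : ℝ)) * minSq V := by
  simpa only [rowsSub_mul, minSq_eq_iInf V, ← mulVec_mulVec,
    sqnorm_mulVec_of_transpose_mul_self_eq_one hΦ] using
    avg_minSq_le_trace_bound_general hk hkn (Φ * V)
end

section
/- Let n ≥ k ≥ 1, let Φ be an n×k real matrix with orthonormal columns (Φᵀ Φ = I_k), and let V be an invertible k×k real matrix such that Φ_S V is invertible for every k-element subset S of {1,…,n}. With ρ_S, ρ_V, Δ_S, Δ_V, β_S defined as: ρ_S = (1/2)·inf{ ‖Φ_S V u‖ : u ∈ ℤ^k, u ≠ 0 }, ρ_V = (1/2)·inf{ ‖V u‖ : u ∈ ℤ^k, u ≠ 0 }, Δ_S = V_k ρ_S^k/√(det((Φ_S V)ᵀ Φ_S V)), Δ_V = V_k ρ_V^k/√(det(VᵀV)), β_S = (ρ_S/ρ_V)^k, where V_k is the Lebesgue volume of the unit Euclidean ball in ℝ^k, let β_min =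 min_S β_S and Δ^# = (∏_S Δ_S)^{1/C(n,k)}. Then (β_min · Δ_V)² ≤ (Δ^#)² / C(n,k). -/
open Matrix

/-- Packing radius of the lattice `M ℤ^k`: half the length of its shortest
nonzero vector. -/
noncomputable def packRad {k : ℕ} (M : Matrix (Fin k) (Fin k) ℝ) : ℝ :=
  (1 / 2) * sInf {t : ℝ | ∃ u : Fin k → ℤ, u ≠ 0 ∧
    t = Real.sqrt (sqnorm (M.mulVec fun j => (u j : ℝ)))}

/-- Lebesgue volume of the unit Euclidean ball in `ℝ^k`. -/
noncomputable def unitBallVol (k : ℕ) : ℝ :=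
  (MeasureTheory.volume (Metric.ball (0 : EuclideanSpace ℝ (Fin k)) 1)).toReal

/-- Packing density of the lattice `M ℤ^k`: `V_k ρ^k / √(det (Mᵀ M))`. -/
noncomputable def packDensity {k : ℕ} (M : Matrix (Fin k) (Fin k) ℝ) : ℝ :=
  unitBallVol k * packRad M ^ k / Real.sqrt ((Mᵀ * M).det)

/-!
For a `k × k` matrix `M`, passing from `V ℤ^k` to `M V ℤ^k` scales `ρ^k` by the contraction ratio
and the covolume by `|det M|`, so `β_S Δ_V = |det Φ_S| Δ_S`. Taking geometric means over `S`, it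
remains to bound that of the `|det Φ_S|`: by AM-GM its square is at most the arithmetic mean of the
`(det Φ_S)²`, whose sum is `det (Φᵀ Φ)` by Cauchy–Binet. The minimum of the `β_S` is at most their
geometric mean.
-/

/-- **Cauchy–Binet formula**: expand the wedge of the rows of `A` in the basis of `⋀^k R^ι` indexed
by `k`-subsets, and apply the linear form that sends a wedge of rows `v` to `det (v B)`. -/
theorem det_mul_eq_sum_det_mul_det {R ι : Type*} [CommRing R] [Fintype ι] [LinearOrder ι] {k : ℕ}
    (A : Matrix (Fin k) ι R) (B : Matrix ι (Fin k) R) :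
    (A * B).det = ∑ S : Set.powersetCard ι k,
      (A.submatrix id (S.1.orderEmbOfFin S.2)).det *
        (B.submatrix (S.1.orderEmbOfFin S.2) id).det := by
  let detMulB : ⋀[R]^k (ι → R) →ₗ[R] R :=
    exteriorPower.alternatingMapLinearEquiv (detRowAlternating.compLinearMap B.vecMulLinear)
  have detMulB_wedge (v : Fin k → ι → R) :
      detMulB (exteriorPower.ιMulti R k v) = (of v * B).det := by
    rw [exteriorPower.alternatingMapLinearEquiv_apply_ιMulti]
    rfl
  have detMulB_basis (S : Set.powersetCard ι k) :
      detMulB ((Pi.basisFun R ι).exteriorPower k S) =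
        (B.submatrix (S.1.orderEmbOfFin S.2) id).det := by
    rw [exteriorPower.basis_apply, exteriorPower.ιMulti_family, detMulB_wedge]
    congr 1
    ext i j
    simp [mul_apply, Set.powersetCard.ofFinEmbEquiv_symm_apply, Pi.single_apply]
  have repr_wedge (S : Set.powersetCard ι k) :
      ((Pi.basisFun R ι).exteriorPower k).repr (exteriorPower.ιMulti R k A.row) S =
        (A.submatrix id (S.1.orderEmbOfFin S.2)).det := by
    rw [exteriorPower.basis_repr_apply, exteriorPower.ιMultiDual_apply_ιMulti]
    rfl
  calc (A * B).det
      = detMulB (exteriorPower.ιMulti R k A.row) := (detMulB_wedge A.row).symm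
    _ = ∑ S : Set.powersetCard ι k, (A.submatrix id (S.1.orderEmbOfFin S.2)).det *
          (B.submatrix (S.1.orderEmbOfFin S.2) id).det := by
        rw [← ((Pi.basisFun R ι).exteriorPower k).sum_repr (exteriorPower.ιMulti R k A.row)]
        simp only [map_sum, map_smul, smul_eq_mul, detMulB_basis, repr_wedge]

theorem det_transpose_mul_self_eq_sum_det_rowsSub_sq {n k : ℕ} (Φ : Matrix (Fin n) (Fin k) ℝ) :
    (Φᵀ * Φ).det = ∑ S, (rowsSub Φ S).det ^ 2 := by
  rw [det_mul_eq_sum_det_mul_det]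
  refine Fintype.sum_equiv (Equiv.subtypeEquivRight (p := (· ∈ Set.powersetCard (Fin n) k))
    fun _ => Set.powersetCard.mem_iff) _ _ fun S => ?_
  change _ = (Φ.submatrix (S.1.orderEmbOfFin S.2) id).det ^ 2
  rw [← transpose_submatrix, det_transpose, sq]

/-- The geometric mean of a finite family of reals, of interest for nonnegative families. -/
noncomputable def geomMean {ι : Type*} [Fintype ι] (f : ι → ℝ) : ℝ :=
  (∏ i, f i) ^ ((1 : ℝ) / Fintype.card ι)

section geomMean

variable {ι : Type*} [Fintype ι] {f g : ι → ℝ}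

theorem geomMean_nonneg (hf : 0 ≤ f) : 0 ≤ geomMean f :=
  Real.rpow_nonneg (Finset.prod_nonneg fun i _ => hf i) _

theorem geomMean_mono (hf : 0 ≤ f) (hfg : f ≤ g) : geomMean f ≤ geomMean g :=
  Real.rpow_le_rpow (Finset.prod_nonneg fun i _ => hf i)
    (Finset.prod_le_prod (fun i _ => hf i) fun i _ => hfg i) (by positivity)

theorem geomMean_mul (hf : 0 ≤ f) (hg : 0 ≤ g) :
    geomMean (fun i => f i * g i) = geomMean f * geomMean g := by
  simp only [geomMean, Finset.prod_mul_distrib]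
  exact Real.mul_rpow (Finset.prod_nonneg fun i _ => hf i) (Finset.prod_nonneg fun i _ => hg i)

variable [Nonempty ι]

theorem geomMean_const {c : ℝ} (hc : 0 ≤ c) : geomMean (fun _ : ι => c) = c := by
  rw [geomMean, Finset.prod_const, Finset.card_univ, one_div,
    Real.pow_rpow_inv_natCast hc Fintype.card_ne_zero]

theorem geomMean_mul_const {c : ℝ} (hf : 0 ≤ f) (hc : 0 ≤ c) :
    geomMean (fun i => f i * c) = geomMean f * c :=
  (geomMean_mul hf fun _ => hc).trans (by rw [geomMean_const hc])

theorem le_geomMean {c : ℝ} (hc : 0 ≤ c) (hcf : ∀ i, c ≤ f i) : c ≤ geomMean f :=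
  (geomMean_const hc).symm.trans_le (geomMean_mono (fun _ => hc) hcf)

theorem geomMean_le_sum_div_card (hf : 0 ≤ f) : geomMean f ≤ (∑ i, f i) / Fintype.card ι := by
  simpa [geomMean] using
    Real.geom_mean_le_arith_mean Finset.univ (fun _ => 1) f (fun _ _ => zero_le_one)
      (by simp [Fintype.card_pos]) fun i _ => hf i

theorem geomMean_sq_le_sum_sq_div_card (hf : 0 ≤ f) :
    geomMean f ^ 2 ≤ (∑ i, f i ^ 2) / Fintype.card ι := by
  simpa only [sq, geomMean_mul hf hf] using
    geomMean_le_sum_div_card fun i => mul_nonneg (hf i) (hf i)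

end geomMean

section Packing

variable {k : ℕ}

theorem packRad_nonneg (M : Matrix (Fin k) (Fin k) ℝ) : 0 ≤ packRad M := by
  refine mul_nonneg (by norm_num) (Real.sInf_nonneg ?_)
  rintro _ ⟨u, _, rfl⟩
  exact Real.sqrt_nonneg _

theorem unitBallVol_nonneg (k : ℕ) : 0 ≤ unitBallVol k :=
  ENNReal.toReal_nonneg

theorem packDensity_eq_div_abs_det (M : Matrix (Fin k) (Fin k) ℝ) :
    packDensity M = unitBallVol k * packRad M ^ k / |M.det| := by
  rw [packDensity, det_mul, det_transpose, Real.sqrt_mul_self_eq_abs]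

theorem packDensity_nonneg (M : Matrix (Fin k) (Fin k) ℝ) : 0 ≤ packDensity M :=
  div_nonneg (mul_nonneg (unitBallVol_nonneg k) (pow_nonneg (packRad_nonneg M) k))
    (Real.sqrt_nonneg _)

/-- The contraction ratio `(ρ(M V ℤ^k) / ρ(V ℤ^k)) ^ k` of the lattice `V ℤ^k` under the linear
map `M`. The paper's `β_S` is the case `M = Φ_S`. -/
noncomputable def contractionRatio (M V : Matrix (Fin k) (Fin k) ℝ) : ℝ :=
  (packRad (M * V) / packRad V) ^ k

theorem contractionRatio_nonneg (M V : Matrix (Fin k) (Fin k) ℝ) : 0 ≤ contractionRatio M V :=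
  pow_nonneg (div_nonneg (packRad_nonneg _) (packRad_nonneg _)) k

/-- Stated with `≤` so as to cover `packRad V = 0`, where the ratio involves a division by zero. -/
theorem contractionRatio_mul_packRad_pow_le (M V : Matrix (Fin k) (Fin k) ℝ) :
    contractionRatio M V * packRad V ^ k ≤ packRad (M * V) ^ k := by
  rw [contractionRatio, ← mul_pow]
  have hV := packRad_nonneg V
  have hMV := packRad_nonneg (M * V)
  gcongr
  exact mul_le_of_le_div₀ hMV hV le_rfl

theorem contractionRatio_mul_packDensity_le {M : Matrix (Fin k) (Fin k) ℝ} (hM : M.det ≠ 0)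
    (V : Matrix (Fin k) (Fin k) ℝ) :
    contractionRatio M V * packDensity V ≤ |M.det| * packDensity (M * V) :=
  calc contractionRatio M V * packDensity V
      = unitBallVol k * (contractionRatio M V * packRad V ^ k) / |V.det| := by
        rw [packDensity_eq_div_abs_det]
        ring
    _ ≤ unitBallVol k * packRad (M * V) ^ k / |V.det| := by
        have hk := unitBallVol_nonneg k
        gcongr
        exact contractionRatio_mul_packRad_pow_le M V
    _ = |M.det| * packDensity (M * V) := by
        rw [packDensity_eq_div_abs_det, det_mul, abs_mul]
        field_simp

end Packing

section DeterminantBound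

variable {n k : ℕ}

theorem nonempty_subtype_card_eq (hkn : k ≤ n) : Nonempty {s : Finset (Fin n) // s.card = k} :=
  Fintype.card_pos_iff.1 (by simpa using Nat.choose_pos hkn)

theorem geomMean_abs_det_rowsSub_sq_le (hkn : k ≤ n) (Φ : Matrix (Fin n) (Fin k) ℝ) :
    geomMean (fun S => |(rowsSub Φ S).det|) ^ 2 ≤ (Φᵀ * Φ).det / n.choose k := by
  have := nonempty_subtype_card_eq hkn
  simpa [det_transpose_mul_self_eq_sum_det_rowsSub_sq] using
    geomMean_sq_le_sum_sq_div_card (f := fun S => |(rowsSub Φ S).det|) fun _ => abs_nonneg _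

theorem geomMean_contractionRatio_mul_packDensity_le (hkn : k ≤ n) {Φ : Matrix (Fin n) (Fin k) ℝ}
    (hΦ : ∀ S, (rowsSub Φ S).det ≠ 0) (V : Matrix (Fin k) (Fin k) ℝ) :
    geomMean (fun S => contractionRatio (rowsSub Φ S) V) * packDensity V ≤
      geomMean (fun S => |(rowsSub Φ S).det|) *
        geomMean (fun S => packDensity (rowsSub Φ S * V)) := by
  have := nonempty_subtype_card_eq hkn
  have hβ : 0 ≤ fun S => contractionRatio (rowsSub Φ S) V := fun _ => contractionRatio_nonneg _ _
  calc geomMean (fun S => contractionRatio (rowsSub Φ S) V) * packDensity V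
      = geomMean (fun S => contractionRatio (rowsSub Φ S) V * packDensity V) :=
        (geomMean_mul_const hβ (packDensity_nonneg V)).symm
    _ ≤ geomMean (fun S => |(rowsSub Φ S).det| * packDensity (rowsSub Φ S * V)) :=
        geomMean_mono (fun S => mul_nonneg (hβ S) (packDensity_nonneg V))
          fun S => contractionRatio_mul_packDensity_le (hΦ S) V
    _ = geomMean (fun S => |(rowsSub Φ S).det|) *
          geomMean (fun S => packDensity (rowsSub Φ S * V)) :=
        geomMean_mul (fun _ => abs_nonneg _) fun _ => packDensity_nonneg _

theorem determinant_bound (hkn : k ≤ n) {Φ : Matrix (Fin n) (Fin k) ℝ}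
    (hΦ : ∀ S, (rowsSub Φ S).det ≠ 0) (V : Matrix (Fin k) (Fin k) ℝ) :
    (geomMean (fun S => contractionRatio (rowsSub Φ S) V) * packDensity V) ^ 2 ≤
      (Φᵀ * Φ).det * geomMean (fun S => packDensity (rowsSub Φ S * V)) ^ 2 / n.choose k :=
  calc (geomMean (fun S => contractionRatio (rowsSub Φ S) V) * packDensity V) ^ 2
      ≤ (geomMean (fun S => |(rowsSub Φ S).det|) *
          geomMean fun S => packDensity (rowsSub Φ S * V)) ^ 2 :=
        pow_le_pow_left₀
          (mul_nonneg (geomMean_nonneg fun _ => contractionRatio_nonneg _ _) (packDensity_nonneg V))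
          (geomMean_contractionRatio_mul_packDensity_le hkn hΦ V) 2
    _ ≤ (Φᵀ * Φ).det / n.choose k * geomMean (fun S => packDensity (rowsSub Φ S * V)) ^ 2 := by
        rw [mul_pow]
        gcongr
        exact geomMean_abs_det_rowsSub_sq_le hkn Φ
    _ = (Φᵀ * Φ).det * geomMean (fun S => packDensity (rowsSub Φ S * V)) ^ 2 / n.choose k :=
        div_mul_eq_mul_div _ _ _

theorem determinant_bound_min_general (hkn : k ≤ n) (Φ : Matrix (Fin n) (Fin k) ℝ)
    (V : Matrix (Fin k) (Fin k) ℝ)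
    (hSV : ∀ S : {s : Finset (Fin n) // s.card = k}, IsUnit (rowsSub Φ S * V).det) :
    (sInf {b : ℝ | ∃ S : {s : Finset (Fin n) // s.card = k},
          b = (packRad (rowsSub Φ S * V) / packRad V) ^ k}
        * packDensity V) ^ 2
      ≤ (Φᵀ * Φ).det * ((∏ S : {s : Finset (Fin n) // s.card = k},
          packDensity (rowsSub Φ S * V)) ^ ((1 : ℝ) / (n.choose k : ℝ))) ^ 2
        / (n.choose k : ℝ) := by
  have := nonempty_subtype_card_eq hkn
  have hΦ (S) : (rowsSub Φ S).det ≠ 0 := left_ne_zero_of_mul (det_mul _ V ▸ (hSV S).ne_zero)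
  set β : Set ℝ := {b | ∃ S, b = contractionRatio (rowsSub Φ S) V}
  have hβ : ∀ b ∈ β, 0 ≤ b := by
    rintro _ ⟨S, rfl⟩
    exact contractionRatio_nonneg _ _
  have βmin_nonneg : 0 ≤ sInf β := Real.sInf_nonneg hβ
  have βmin_le : sInf β ≤ geomMean fun S => contractionRatio (rowsSub Φ S) V :=
    le_geomMean βmin_nonneg fun S => csInf_le ⟨0, hβ⟩ ⟨S, rfl⟩
  have hΔV := packDensity_nonneg V
  calc (sInf β * packDensity V) ^ 2
      ≤ (geomMean (fun S => contractionRatio (rowsSub Φ S) V) * packDensity V) ^ 2 := by gcongr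
    _ ≤ (Φᵀ * Φ).det * geomMean (fun S => packDensity (rowsSub Φ S * V)) ^ 2 / n.choose k :=
        determinant_bound hkn hΦ V
    _ = _ := by
        rw [geomMean, Fintype.card_finset_len, Fintype.card_fin]

end DeterminantBound

/-- Corollary to the Determinant Bound: with `β_min` the minimum contraction ratio
`β_S = (ρ_S/ρ_V)^k` over all `k`-subsets `S` and `Δ^#` the geometric mean of the
packing densities of the child lattices, `(β_min Δ_V)² ≤ (Δ^#)² / C(n,k)`. -/
theorem determinant_bound_min (n k : ℕ) (hk : 1 ≤ k) (hkn : k ≤ n)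
    (Φ : Matrix (Fin n) (Fin k) ℝ) (hΦ : Φᵀ * Φ = 1)
    (V : Matrix (Fin k) (Fin k) ℝ) (hV : IsUnit V.det)
    (hSV : ∀ S : {s : Finset (Fin n) // s.card = k}, IsUnit (rowsSub Φ S * V).det) :
    (sInf {b : ℝ | ∃ S : {s : Finset (Fin n) // s.card = k},
          b = (packRad (rowsSub Φ S * V) / packRad V) ^ k}
        * packDensity V) ^ 2
      ≤ ((∏ S : {s : Finset (Fin n) // s.card = k},
          packDensity (rowsSub Φ S * V)) ^ ((1 : ℝ) / (n.choose k : ℝ))) ^ 2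
        / (n.choose k : ℝ) := by
  simpa only [hΦ, det_one, one_mul] using determinant_bound_min_general hkn Φ V hSV
end
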